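/- arXiv:2105.06577 — 3 statements merged into one kernel-verified Lean document; each statement's English description precedes it below -/
import Mathlib

section
/- (Theorem 1, boundedness.) For any solution of the classical adaptive-control error model, the functions e and Θ̃ are bounded on [0,∞); that is, there exists C > 0 (depending on e(0), Θ̃(0) and the fixed data) such that ‖e(t)‖ ≤ C and ‖Θ̃(t)‖ ≤ C for all t ≥ 0. -/
open Matrix MeasureTheory Filter

/-!
Because `Λ` and `Γ` commute, `M = ΛΓ⁻¹` is symmetric positive definite, and
`V(e, Θ) = eᵀPe + tr(ΘᵀMΘ)` is a Lyapunov function: along a solution the two cross terms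
`2eᵀPBΛΘΦ` and `-2 tr(ΘᵀMΓBᵀPeΦᵀ)` cancel since `MΓ = Λ`, which leaves
`V' = eᵀ(AₘᵀP + PAₘ)e ≤ 0`. Thus `V` stays below its initial value, and it dominates a positive
multiple of `‖e‖² + ‖Θ‖²`.
-/

section PosDef

open scoped ComplexOrder MatrixOrder Matrix.Norms.L2Operator

variable {𝕜 ι : Type*} [RCLike 𝕜]

theorem posDef_mul_of_commute [Fintype ι] {A B : Matrix ι ι 𝕜} (hA : A.PosDef)
    (hB : B.PosDef) (hAB : Commute A B) : (A * B).PosDef := by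
  classical
  exact ((hA.isStrictlyPositive.commute_iff hB.isStrictlyPositive).1 hAB).posDef

variable [DecidableEq ι]

theorem posDef_mul_inv_of_commute [Fintype ι] {A B : Matrix ι ι 𝕜} (hA : A.PosDef)
    (hB : B.PosDef) (hAB : Commute A B) : (A * B⁻¹).PosDef := by
  refine posDef_mul_of_commute hA hB.inv ?_
  simpa only [Matrix.zpow_neg_one] using Matrix.Commute.zpow_right hAB (-1)

theorem exists_pos_posSemidef_sub_smul_one [Finite ι] {A : Matrix ι ι 𝕜} (hA : A.PosDef) :
    ∃ c > (0 : ℝ), (A - c • (1 : Matrix ι ι 𝕜)).PosSemidef := by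
  have := Fintype.ofFinite ι
  cases isEmpty_or_nonempty ι
  · exact ⟨1, one_pos, Subsingleton.elim 0 (A - _) ▸ .zero⟩
  · obtain ⟨c, hc, hcA⟩ := (CFC.exists_pos_algebraMap_le_iff hA.isHermitian.isSelfAdjoint).2
      fun x hx ↦ hA.isStrictlyPositive.spectrum_pos hx
    exact ⟨c, hc, Matrix.le_iff.1 (Algebra.algebraMap_eq_smul_one (A := Matrix ι ι 𝕜) c ▸ hcA)⟩

end PosDef

section QuadraticForm

variable {ι : Type*} [Fintype ι]

theorem exists_pos_forall_mul_sum_sq_le {M : Matrix ι ι ℝ} (hM : M.PosDef) :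
    ∃ c > 0, ∀ x : ι → ℝ, c * ∑ i, x i ^ 2 ≤ x ⬝ᵥ M *ᵥ x := by
  classical
  obtain ⟨c, hc, hcM⟩ := exists_pos_posSemidef_sub_smul_one hM
  refine ⟨c, hc, fun x ↦ sub_nonneg.1 ?_⟩
  have hsq : ∑ i, x i ^ 2 = x ⬝ᵥ x := Finset.sum_congr rfl fun i _ ↦ sq (x i)
  simpa [hsq, sub_mulVec, smul_mulVec] using hcM.dotProduct_mulVec_nonneg x

variable {R : Type*} [CommSemiring R]

theorem dotProduct_transpose_mul_add_mul_mulVec {P : Matrix ι ι R} (hP : P.IsSymm)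
    (A : Matrix ι ι R) (x : ι → R) :
    x ⬝ᵥ (Aᵀ * P + P * A) *ᵥ x = 2 * (x ⬝ᵥ P *ᵥ A *ᵥ x) := by
  have htranspose : Aᵀ * P = (P * A)ᵀ := by rw [transpose_mul, hP.eq]
  rw [add_mulVec, dotProduct_add, htranspose, dotProduct_transpose_mulVec, mulVec_mulVec, two_mul]

theorem dotProduct_mul_mulVec_eq_sum_col {κ ν : Type*} [Fintype κ] [Fintype ν]
    (A : Matrix ν ι R) (Θ : Matrix ι κ R) (x : ν → R) (φ : κ → R) :
    x ⬝ᵥ (A * Θ) *ᵥ φ = ∑ j, φ j * (Θ.col j ⬝ᵥ Aᵀ *ᵥ x) := by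
  rw [← dotProduct_transpose_mulVec, transpose_mul, ← mulVec_mulVec]
  rfl

theorem hasDerivWithinAt_dotProduct_mulVec_self {𝕜 : Type*} [NontriviallyNormedField 𝕜]
    {M : Matrix ι ι 𝕜} (hM : M.IsSymm) {x : 𝕜 → ι → 𝕜} {x' : ι → 𝕜} {s : Set 𝕜} {t : 𝕜}
    (hx : HasDerivWithinAt x x' s t) :
    HasDerivWithinAt (fun τ ↦ x τ ⬝ᵥ M *ᵥ x τ) (2 * (x t ⬝ᵥ M *ᵥ x')) s t := by
  have hx_apply := hasDerivWithinAt_pi.1 hx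
  have hsum : HasDerivWithinAt (fun τ ↦ x τ ⬝ᵥ M *ᵥ x τ)
      (∑ i, (x' i * (M *ᵥ x t) i + x t i * (M *ᵥ x') i)) s t :=
    .fun_sum fun i _ ↦ (hx_apply i).mul (.fun_sum fun j _ ↦ (hx_apply j).const_mul (M i j))
  have hswap : x' ⬝ᵥ M *ᵥ x t = x t ⬝ᵥ M *ᵥ x' := by
    rw [← dotProduct_transpose_mulVec, hM.eq]
  refine hsum.congr_deriv ?_
  rw [Finset.sum_add_distrib, two_mul]
  exact congrArg (· + _) hswap

end QuadraticForm

section ErrorModel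

variable {n m l : Type*} [Fintype n] [Fintype m] [Fintype l]

/-- The classical adaptive-control error model on a set `D` of times: `e' = Aₘe + BΛΘΦ` and
`Θ' = -ΓBᵀPeΦᵀ`, where `e` is the tracking error, `Θ` the parameter error and `Φ` the regressor.
The second equation is stated entry by entry, and derivatives are taken within `D`, hence one-sided
at an endpoint of an interval. -/
structure IsErrorModelSolutionOn (Am : Matrix n n ℝ) (B : Matrix n m ℝ) (P : Matrix n n ℝ)
    (Λ Γ : Matrix m m ℝ) (Φ : ℝ → l → ℝ) (e : ℝ → n → ℝ) (Θ : ℝ → Matrix m l ℝ)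
    (D : Set ℝ) : Prop where
  hasDerivWithinAt_error : ∀ t ∈ D,
    HasDerivWithinAt e (Am *ᵥ e t + (B * Λ * Θ t) *ᵥ Φ t) D t
  hasDerivWithinAt_parameter : ∀ t ∈ D, ∀ i j,
    HasDerivWithinAt (fun s ↦ Θ s i j) (-(((Γ * Bᵀ * P) *ᵥ e t) i * Φ t j)) D t

/-- The Lyapunov function `eᵀPe + tr(ΘᵀMΘ)` of the error model, used with `M = ΛΓ⁻¹`. The trace is
written as the sum of the values of the quadratic form `M` at the columns of `Θ`. -/
def lyapunov (P : Matrix n n ℝ) (M : Matrix m m ℝ) (e : n → ℝ) (Θ : Matrix m l ℝ) : ℝ :=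
  e ⬝ᵥ P *ᵥ e + ∑ j, Θ.col j ⬝ᵥ M *ᵥ Θ.col j

theorem exists_pos_forall_mul_sum_sq_le_lyapunov {P : Matrix n n ℝ} {M : Matrix m m ℝ}
    (hP : P.PosDef) (hM : M.PosDef) :
    ∃ c > 0, ∀ (e : n → ℝ) (Θ : Matrix m l ℝ),
      c * (∑ i, e i ^ 2 + ∑ i, ∑ j, Θ i j ^ 2) ≤ lyapunov P M e Θ := by
  obtain ⟨p, hp, hpP⟩ := exists_pos_forall_mul_sum_sq_le hP
  obtain ⟨q, hq, hqM⟩ := exists_pos_forall_mul_sum_sq_le hM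
  refine ⟨min p q, lt_min hp hq, fun e Θ ↦ ?_⟩
  have herror : min p q * ∑ i, e i ^ 2 ≤ e ⬝ᵥ P *ᵥ e :=
    (mul_le_mul_of_nonneg_right (min_le_left p q) (by positivity)).trans (hpP e)
  have hcol (j : l) : min p q * ∑ i, Θ i j ^ 2 ≤ Θ.col j ⬝ᵥ M *ᵥ Θ.col j :=
    (mul_le_mul_of_nonneg_right (min_le_right p q) (by positivity)).trans (hqM (Θ.col j))
  calc min p q * (∑ i, e i ^ 2 + ∑ i, ∑ j, Θ i j ^ 2)
      = min p q * ∑ i, e i ^ 2 + ∑ j, min p q * ∑ i, Θ i j ^ 2 := by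
        rw [mul_add, ← Finset.mul_sum, Finset.sum_comm]
    _ ≤ lyapunov P M e Θ := add_le_add herror (Finset.sum_le_sum fun j _ ↦ hcol j)

namespace IsErrorModelSolutionOn

variable {Am : Matrix n n ℝ} {B : Matrix n m ℝ} {P : Matrix n n ℝ} {Λ Γ M : Matrix m m ℝ}
  {Φ : ℝ → l → ℝ} {e : ℝ → n → ℝ} {Θ : ℝ → Matrix m l ℝ} {D : Set ℝ}

theorem hasDerivWithinAt_col (h : IsErrorModelSolutionOn Am B P Λ Γ Φ e Θ D) {t : ℝ} (ht : t ∈ D)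
    (j : l) :
    HasDerivWithinAt (fun s ↦ (Θ s).col j) (-Φ t j • (Γ * Bᵀ * P) *ᵥ e t) D t := by
  refine hasDerivWithinAt_pi.2 fun i ↦ (h.hasDerivWithinAt_parameter t ht i j).congr_deriv ?_
  rw [Pi.smul_apply, smul_eq_mul, neg_mul, mul_comm]

theorem hasDerivWithinAt_lyapunov (h : IsErrorModelSolutionOn Am B P Λ Γ Φ e Θ D)
    (hP : P.IsSymm) (hM : M.IsSymm) (hΛ : Λ.IsSymm) (hMΓ : M * Γ = Λ) {t : ℝ} (ht : t ∈ D) :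
    HasDerivWithinAt (fun s ↦ lyapunov P M (e s) (Θ s))
      (e t ⬝ᵥ (Amᵀ * P + P * Am) *ᵥ e t) D t := by
  have herror : e t ⬝ᵥ P *ᵥ ((B * Λ * Θ t) *ᵥ Φ t) =
      ∑ j, Φ t j * ((Θ t).col j ⬝ᵥ (Λ * Bᵀ * P) *ᵥ e t) := by
    rw [mulVec_mulVec, ← Matrix.mul_assoc, dotProduct_mul_mulVec_eq_sum_col, transpose_mul,
      transpose_mul, hP.eq, hΛ.eq]
  have hparameter (j : l) : (Θ t).col j ⬝ᵥ M *ᵥ (-Φ t j • (Γ * Bᵀ * P) *ᵥ e t) =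
      -(Φ t j * ((Θ t).col j ⬝ᵥ (Λ * Bᵀ * P) *ᵥ e t)) := by
    rw [mulVec_smul, dotProduct_smul, mulVec_mulVec, ← Matrix.mul_assoc, ← Matrix.mul_assoc, hMΓ,
      smul_eq_mul, neg_mul]
  refine ((hasDerivWithinAt_dotProduct_mulVec_self hP (h.hasDerivWithinAt_error t ht)).add
    (.fun_sum fun j _ ↦
      hasDerivWithinAt_dotProduct_mulVec_self hM (h.hasDerivWithinAt_col ht j))).congr_deriv ?_
  rw [dotProduct_transpose_mul_add_mul_mulVec hP, mulVec_add, dotProduct_add, herror,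
    ← Finset.mul_sum]
  simp only [hparameter, Finset.sum_neg_distrib]
  ring

theorem antitoneOn_lyapunov (h : IsErrorModelSolutionOn Am B P Λ Γ Φ e Θ D) (hD : Convex ℝ D)
    (hP : P.IsSymm) (hM : M.IsSymm) (hΛ : Λ.IsSymm) (hMΓ : M * Γ = Λ)
    (hAm : (-(Amᵀ * P + P * Am)).PosSemidef) :
    AntitoneOn (fun t ↦ lyapunov P M (e t) (Θ t)) D := by
  have hderiv {t : ℝ} (ht : t ∈ D) := h.hasDerivWithinAt_lyapunov hP hM hΛ hMΓ ht
  refine antitoneOn_of_hasDerivWithinAt_nonpos hD (fun t ht ↦ (hderiv ht).continuousWithinAt)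
    (fun t ht ↦ (hderiv (interior_subset ht)).mono interior_subset) fun t _ ↦ ?_
  simpa only [neg_mulVec, dotProduct_neg, star_trivial, Left.nonneg_neg_iff]
    using hAm.dotProduct_mulVec_nonneg (e t)

end IsErrorModelSolutionOn

theorem classical_ac_boundedness_general {Am : Matrix n n ℝ} {B : Matrix n m ℝ}
    {P : Matrix n n ℝ} {Λ Γ : Matrix m m ℝ} {Φ : ℝ → l → ℝ} {e : ℝ → n → ℝ}
    {Θ : ℝ → Matrix m l ℝ} (h : IsErrorModelSolutionOn Am B P Λ Γ Φ e Θ (Set.Ici 0))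
    (hP : P.PosDef) (hAm : (-(Amᵀ * P + P * Am)).PosSemidef)
    (hΛ : Λ.PosDef) (hΓ : Γ.PosDef) (hcomm : Commute Λ Γ) :
    ∃ C > 0, ∀ t ∈ Set.Ici (0 : ℝ),
      √(∑ i, e t i ^ 2) ≤ C ∧ √(∑ i, ∑ j, Θ t i j ^ 2) ≤ C := by
  classical
  have hM : (Λ * Γ⁻¹).PosDef := posDef_mul_inv_of_commute hΛ hΓ hcomm
  have hMΓ : Λ * Γ⁻¹ * Γ = Λ :=
    nonsing_inv_mul_cancel_right _ _ ((isUnit_iff_isUnit_det Γ).1 hΓ.isUnit)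
  have hanti := h.antitoneOn_lyapunov (convex_Ici 0) (isHermitian_iff_isSymm.1 hP.isHermitian)
    (isHermitian_iff_isSymm.1 hM.isHermitian) (isHermitian_iff_isSymm.1 hΛ.isHermitian) hMΓ hAm
  obtain ⟨c, hc, hcoercive⟩ := exists_pos_forall_mul_sum_sq_le_lyapunov (l := l) hP hM
  set V₀ := lyapunov P (Λ * Γ⁻¹) (e 0) (Θ 0)
  refine ⟨√(V₀ / c) + 1, by positivity, fun t ht ↦ ?_⟩
  have hbound : ∑ i, e t i ^ 2 + ∑ i, ∑ j, Θ t i j ^ 2 ≤ V₀ / c :=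
    (le_div_iff₀' hc).2 ((hcoercive (e t) (Θ t)).trans (hanti Set.self_mem_Ici ht ht))
  have he_nonneg : 0 ≤ ∑ i, e t i ^ 2 := by positivity
  have hΘ_nonneg : 0 ≤ ∑ i, ∑ j, Θ t i j ^ 2 := by positivity
  exact ⟨(Real.sqrt_le_sqrt (by linarith)).trans (lt_add_one _).le,
    (Real.sqrt_le_sqrt (by linarith)).trans (lt_add_one _).le⟩

end ErrorModel

/-- Theorem 1, boundedness. For any solution of the classical
adaptive-control error model, the functions `e` and `Θ̃` are bounded on `[0,∞)`. -/
theorem classical_ac_boundedness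
    (n m l : ℕ)
    (Am : Matrix (Fin n) (Fin n) ℝ) (B : Matrix (Fin n) (Fin m) ℝ)
    (Q P : Matrix (Fin n) (Fin n) ℝ)
    (hQ : Q.PosDef) (hP : P.PosDef)
    (hLyap : Amᵀ * P + P * Am = -Q)
    (Λ Γ : Matrix (Fin m) (Fin m) ℝ)
    (hΛ : Λ.PosDef) (hΓ : Γ.PosDef) (hcomm : Λ * Γ = Γ * Λ)
    (Φ : ℝ → Fin l → ℝ) (hΦ : ContinuousOn Φ (Set.Ici 0))
    (e : ℝ → Fin n → ℝ) (Θ : ℝ → Matrix (Fin m) (Fin l) ℝ)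
    (he : ∀ t ∈ Set.Ici (0 : ℝ),
      HasDerivAt e (Am.mulVec (e t) + (B * Λ * Θ t).mulVec (Φ t)) t)
    (hΘ : ∀ t ∈ Set.Ici (0 : ℝ), ∀ i j,
      HasDerivAt (fun s => Θ s i j) (-((Γ * Bᵀ * P).mulVec (e t) i * Φ t j)) t) :
    ∃ C > 0, ∀ t ∈ Set.Ici (0 : ℝ),
      Real.sqrt (∑ i, e t i ^ 2) ≤ C ∧
      Real.sqrt (∑ i, ∑ j, Θ t i j ^ 2) ≤ C :=
  classical_ac_boundedness_general
    ⟨fun t ht ↦ (he t ht).hasDerivWithinAt, fun t ht i j ↦ (hΘ t ht i j).hasDerivWithinAt⟩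
    hP (by rw [hLyap, neg_neg]; exact hQ.posSemidef) hΛ hΓ hcomm
end

section
/- (Theorem 1, convergence.) If in addition the regressor Φ is bounded on [0,∞), then along any solution of the classical adaptive-control error model the tracking error converges to zero: lim_{t→∞} e(t) = 0. -/
open Matrix MeasureTheory Filter

/-!
The Lyapunov function `V = eᵀPe + tr(Θᵀ(ΛΓ⁻¹)Θ)` satisfies `V' = -eᵀQe` along solutions: the
adaptation law is chosen so that the two terms containing `Θ` cancel, and the weight `ΛΓ⁻¹` is
positive definite because `Λ` and `Γ` commute. Hence `V` is nonincreasing, so `e` and `Θ` stay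
bounded, and with `Φ` bounded so does `e'`. Therefore `eᵀQe` is uniformly continuous, and since it
is minus the derivative of the convergent function `V`, Barbălat's lemma gives `eᵀQe → 0`.
-/

open Set Bornology
open scoped Topology

theorem isBounded_image_of_continuous {X Y : Type*} [PseudoMetricSpace X] [ProperSpace X]
    [PseudoMetricSpace Y] {f : X → Y} (hf : Continuous f) {s : Set X} (hs : IsBounded s) :
    IsBounded (f '' s) :=
  (hs.isCompact_closure.image hf).isBounded.subset (image_mono subset_closure)

section Barbalat

variable {E : Type*} [NormedAddCommGroup E] [NormedSpace ℝ E] {a : ℝ}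

theorem norm_image_sub_sub_smul_le_of_hasDerivWithinAt {f f' : ℝ → E} {s : Set ℝ} {c : E} {ε : ℝ}
    (hs : Convex ℝ s) (hf : ∀ t ∈ s, HasDerivWithinAt f (f' t) s t)
    (hc : ∀ t ∈ s, ‖f' t - c‖ ≤ ε) {t u : ℝ} (ht : t ∈ s) (hu : u ∈ s) :
    ‖f u - f t - (u - t) • c‖ ≤ ε * ‖u - t‖ := by
  have hderiv : ∀ r ∈ s, HasDerivWithinAt (fun r => f r - r • c) (f' r - c) s r := fun r hr => by
    simpa only [one_smul, id] using (hf r hr).fun_sub ((hasDerivWithinAt_id r s).smul_const c)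
  convert hs.norm_image_sub_le_of_norm_hasDerivWithin_le hderiv hc ht hu using 2
  rw [sub_smul]
  abel

theorem tendsto_zero_of_uniformContinuousOn_of_hasDerivWithinAt {f f' : ℝ → E} {L : E}
    (hf : ∀ t ∈ Ici a, HasDerivWithinAt f (f' t) (Ici a) t) (hf' : UniformContinuousOn f' (Ici a))
    (hL : Tendsto f atTop (𝓝 L)) : Tendsto f' atTop (𝓝 0) := by
  rw [Metric.tendsto_nhds]
  intro ε hε
  obtain ⟨η, hη, hclose⟩ := Metric.uniformContinuousOn_iff_le.1 hf' (ε / 2) (half_pos hε)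
  have hincr : Tendsto (fun t => f (t + η) - f t) atTop (𝓝 0) := by
    simpa only [sub_self, Function.comp_def, id] using
      (hL.comp (tendsto_atTop_add_const_right atTop η tendsto_id)).sub hL
  have hsmall := Metric.tendsto_nhds.1 hincr (η * (ε / 2)) (by positivity)
  filter_upwards [eventually_ge_atTop a, hsmall] with t hat hsmall
  have hsub : Icc t (t + η) ⊆ Ici a := fun s hs => hat.trans hs.1
  have hlin : ‖f (t + η) - f t - (t + η - t) • f' t‖ ≤ ε / 2 * ‖t + η - t‖ := by
    refine norm_image_sub_sub_smul_le_of_hasDerivWithinAt (convex_Icc t (t + η))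
      (fun s hs => (hf s (hsub hs)).mono hsub) (fun s hs => ?_)
      (left_mem_Icc.2 (by linarith)) (right_mem_Icc.2 (by linarith))
    rw [← dist_eq_norm]
    refine hclose s (hsub hs) t hat ?_
    rw [Real.dist_eq, abs_le]
    constructor <;> linarith [hs.1, hs.2]
  rw [add_sub_cancel_left, Real.norm_of_nonneg hη.le] at hlin
  rw [dist_zero_right] at hsmall ⊢
  refine lt_of_mul_lt_mul_left ?_ hη.le
  calc η * ‖f' t‖ = ‖η • f' t‖ := by rw [norm_smul, Real.norm_of_nonneg hη.le]
    _ ≤ ‖f (t + η) - f t‖ + ‖f (t + η) - f t - η • f' t‖ := norm_le_insert _ _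
    _ < η * (ε / 2) + ε / 2 * η := add_lt_add_of_lt_of_le hsmall hlin
    _ = η * ε := by ring

theorem exists_tendsto_atTop_of_antitoneOn_Ici {α β : Type*} [LinearOrder α]
    [ConditionallyCompleteLinearOrder β] [TopologicalSpace β] [OrderTopology β] {f : α → β} {a : α}
    (hf : AntitoneOn f (Ici a)) (hbdd : BddBelow (f '' Ici a)) :
    ∃ L, Tendsto f atTop (𝓝 L) := by
  have hanti : Antitone fun t => f (max a t) := fun s t hst =>
    hf (le_max_left a s) (le_max_left a t) (max_le_max_left a hst)
  have hrange : BddBelow (range fun t => f (max a t)) :=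
    hbdd.mono (range_subset_iff.2 fun t => mem_image_of_mem f (le_max_left a t))
  refine ⟨_, (tendsto_atTop_ciInf hanti hrange).congr' ?_⟩
  filter_upwards [eventually_ge_atTop a] with t ht
  rw [max_eq_right ht]

theorem antitoneOn_Ici_of_hasDerivWithinAt_neg {V g : ℝ → ℝ}
    (hV : ∀ t ∈ Ici a, HasDerivWithinAt V (-g t) (Ici a) t) (hg : ∀ t ∈ Ici a, 0 ≤ g t) :
    AntitoneOn V (Ici a) :=
  antitoneOn_of_hasDerivWithinAt_nonpos (convex_Ici a) (fun t ht => (hV t ht).continuousWithinAt)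
    (fun t ht => (hV t (interior_subset ht)).mono interior_subset)
    fun t ht => neg_nonpos.2 (hg t (interior_subset ht))

theorem tendsto_zero_of_hasDerivWithinAt_neg {V g : ℝ → ℝ}
    (hV : ∀ t ∈ Ici a, HasDerivWithinAt V (-g t) (Ici a) t) (hVbdd : BddBelow (V '' Ici a))
    (hg : ∀ t ∈ Ici a, 0 ≤ g t) (hgu : UniformContinuousOn g (Ici a)) :
    Tendsto g atTop (𝓝 0) := by
  obtain ⟨L, hL⟩ :=
    exists_tendsto_atTop_of_antitoneOn_Ici (antitoneOn_Ici_of_hasDerivWithinAt_neg hV hg) hVbdd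
  simpa only [neg_neg, neg_zero] using
    (tendsto_zero_of_uniformContinuousOn_of_hasDerivWithinAt hV
      (uniformContinuous_neg.comp_uniformContinuousOn hgu) hL).neg

theorem uniformContinuousOn_comp_of_isBounded_deriv [ProperSpace E] {F : Type*} [UniformSpace F]
    {W : E → F} (hW : Continuous W) {x x' : ℝ → E} {s : Set ℝ} (hs : Convex ℝ s)
    (hx : ∀ t ∈ s, HasDerivWithinAt x (x' t) s t) (hxb : IsBounded (x '' s))
    (hx'b : IsBounded (x' '' s)) : UniformContinuousOn (fun t => W (x t)) s := by
  obtain ⟨C, hC⟩ := hx'b.exists_norm_le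
  have hlip : LipschitzOnWith C.toNNReal x s :=
    hs.lipschitzOnWith_of_nnnorm_hasDerivWithin_le hx fun t ht =>
      NNReal.coe_le_coe.1 ((hC _ (mem_image_of_mem x' ht)).trans (Real.le_coe_toNNReal C))
  have hWu : UniformContinuousOn W (closure (x '' s)) :=
    hxb.isCompact_closure.uniformContinuousOn_of_continuous hW.continuousOn
  exact hWu.comp hlip.uniformContinuousOn fun t ht => subset_closure (mem_image_of_mem x ht)

end Barbalat

section Homogeneous

variable {E : Type*} [NormedAddCommGroup E] [NormedSpace ℝ E] [ProperSpace E] {q : E → ℝ}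

theorem exists_pos_mul_sq_norm_le (hq : Continuous q) (hsmul : ∀ (r : ℝ) x, q (r • x) = r ^ 2 * q x)
    (hpos : ∀ x ≠ 0, 0 < q x) : ∃ c > 0, ∀ x, c * ‖x‖ ^ 2 ≤ q x := by
  have hne : ∀ x ∈ Metric.sphere (0 : E) 1, x ≠ 0 := fun x hx =>
    ne_zero_of_mem_unit_sphere ⟨x, hx⟩
  obtain ⟨c, hc, hle⟩ := (isCompact_sphere (0 : E) 1).exists_forall_le' hq.continuousOn
    fun x hx => hpos x (hne x hx)
  refine ⟨c, hc, fun x => ?_⟩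
  obtain rfl | hx := eq_or_ne x 0
  · simpa using (hsmul 0 0).ge
  have hunit : ‖x‖⁻¹ • x ∈ Metric.sphere (0 : E) 1 := by
    simpa using norm_smul_inv_norm (𝕜 := ℝ) hx
  calc c * ‖x‖ ^ 2 ≤ q (‖x‖⁻¹ • x) * ‖x‖ ^ 2 := by gcongr; exact hle _ hunit
    _ = q x := by rw [hsmul]; field_simp [norm_ne_zero_iff.2 hx]

theorem isBounded_setOf_le_of_homogeneous (hq : Continuous q)
    (hsmul : ∀ (r : ℝ) x, q (r • x) = r ^ 2 * q x) (hpos : ∀ x ≠ 0, 0 < q x) (b : ℝ) :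
    IsBounded {x | q x ≤ b} := by
  obtain ⟨c, hc, hle⟩ := exists_pos_mul_sq_norm_le hq hsmul hpos
  refine isBounded_iff_forall_norm_le.2 ⟨√(b / c), fun x hx => Real.le_sqrt_of_sq_le ?_⟩
  rw [le_div_iff₀' hc]
  exact (hle x).trans hx

theorem tendsto_zero_of_homogeneous_tendsto_zero (hq : Continuous q)
    (hsmul : ∀ (r : ℝ) x, q (r • x) = r ^ 2 * q x) (hpos : ∀ x ≠ 0, 0 < q x)
    {α : Type*} {u : Filter α} {x : α → E} (hx : Tendsto (fun t => q (x t)) u (𝓝 0)) :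
    Tendsto x u (𝓝 0) := by
  obtain ⟨c, hc, hle⟩ := exists_pos_mul_sq_norm_le hq hsmul hpos
  have hsqrt : Tendsto (fun t => √(q (x t) / c)) u (𝓝 0) := by
    simpa using (hx.div_const c).sqrt
  refine squeeze_zero_norm (fun t => Real.le_sqrt_of_sq_le ?_) hsqrt
  rw [le_div_iff₀' hc]
  exact hle (x t)

end Homogeneous

section Matrix

variable {n m l : Type*} [Fintype n] [Fintype m] [Fintype l]

open scoped MatrixOrder in
theorem posDef_mul_inv_of_commute_s2 [DecidableEq m] {Λ Γ : Matrix m m ℝ} (hΛ : Λ.PosDef)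
    (hΓ : Γ.PosDef) (hcomm : Commute Λ Γ) : (Λ * Γ⁻¹).PosDef := by
  have hcomm_inv : Commute Λ Γ⁻¹ := by
    obtain ⟨u, rfl⟩ := hΓ.isUnit
    simpa only [coe_units_inv] using hcomm.units_inv_right
  exact ((hΛ.isStrictlyPositive.commute_iff hΓ.inv.isStrictlyPositive).1 hcomm_inv).posDef

theorem mul_inv_mul_gain_eq_transpose_mul [DecidableEq m] {Λ Γ : Matrix m m ℝ} (hΛ : Λ.IsSymm)
    (hΓ : IsUnit Γ) (B : Matrix n m ℝ) (P : Matrix n n ℝ) :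
    Λ * Γ⁻¹ * (Γ * Bᵀ * P) = (B * Λ)ᵀ * P := by
  rw [transpose_mul, hΛ.eq, Matrix.mul_assoc Γ, Matrix.mul_assoc Λ,
    nonsing_inv_mul_cancel_left _ _ ((isUnit_iff_isUnit_det Γ).1 hΓ), Matrix.mul_assoc]

theorem hasDerivWithinAt_dotProduct {x y : ℝ → n → ℝ} {x' y' : n → ℝ} {s : Set ℝ} {t : ℝ}
    (hx : HasDerivWithinAt x x' s t) (hy : HasDerivWithinAt y y' s t) :
    HasDerivWithinAt (fun r => x r ⬝ᵥ y r) (x' ⬝ᵥ y t + x t ⬝ᵥ y') s t := by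
  rw [hasDerivWithinAt_pi] at hx hy
  simp only [dotProduct, ← Finset.sum_add_distrib]
  exact HasDerivWithinAt.fun_sum fun i _ => (hx i).mul (hy i)

theorem hasDerivWithinAt_mulVec {p : Type*} [Finite p] (M : Matrix p n ℝ) {x : ℝ → n → ℝ}
    {x' : n → ℝ} {s : Set ℝ} {t : ℝ} (hx : HasDerivWithinAt x x' s t) :
    HasDerivWithinAt (fun r => M *ᵥ x r) (M *ᵥ x') s t :=
  have := Fintype.ofFinite p
  M.mulVecLin.toContinuousLinearMap.hasFDerivAt.comp_hasDerivWithinAt t hx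

theorem dotProduct_mulVec_comm_of_isSymm {S : Matrix n n ℝ} (hS : S.IsSymm) (x y : n → ℝ) :
    x ⬝ᵥ S *ᵥ y = y ⬝ᵥ S *ᵥ x := by
  rw [dotProduct_mulVec, ← mulVec_transpose, hS.eq, dotProduct_comm]

theorem hasDerivWithinAt_dotProduct_mulVec_self_s2 {S : Matrix n n ℝ} (hS : S.IsSymm)
    {x : ℝ → n → ℝ} {x' : n → ℝ} {s : Set ℝ} {t : ℝ} (hx : HasDerivWithinAt x x' s t) :
    HasDerivWithinAt (fun r => x r ⬝ᵥ S *ᵥ x r) (2 * (x t ⬝ᵥ S *ᵥ x')) s t := by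
  convert hasDerivWithinAt_dotProduct hx (hasDerivWithinAt_mulVec S hx) using 1
  rw [dotProduct_mulVec_comm_of_isSymm hS x', two_mul]

theorem trace_transpose_mul_mul_eq_sum (M : Matrix m l ℝ) (S : Matrix m m ℝ) (N : Matrix m l ℝ) :
    (Mᵀ * S * N).trace = ∑ j, M.col j ⬝ᵥ S *ᵥ N.col j := by
  simp only [trace, diag_apply, Matrix.mul_assoc]
  rfl

theorem hasDerivWithinAt_trace_transpose_mul_mul_self {S : Matrix m m ℝ} (hS : S.IsSymm)
    {M : ℝ → Matrix m l ℝ} {M' : Matrix m l ℝ} {s : Set ℝ} {t : ℝ}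
    (hM : ∀ i j, HasDerivWithinAt (fun r => M r i j) (M' i j) s t) :
    HasDerivWithinAt (fun r => ((M r)ᵀ * S * M r).trace) (2 * ((M t)ᵀ * S * M').trace) s t := by
  simp only [trace_transpose_mul_mul_eq_sum, Finset.mul_sum]
  exact HasDerivWithinAt.fun_sum fun j _ =>
    hasDerivWithinAt_dotProduct_mulVec_self_s2 hS (hasDerivWithinAt_pi.2 fun i => hM i j)

theorem trace_transpose_mul_mul_self_pos {S : Matrix m m ℝ} (hS : S.PosDef) {M : Matrix m l ℝ}
    (hM : M ≠ 0) : 0 < (Mᵀ * S * M).trace := by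
  obtain ⟨j, hj⟩ : ∃ j, M.col j ≠ 0 := by
    by_contra! h
    exact hM (ext fun i j => congrFun (h j) i)
  rw [trace_transpose_mul_mul_eq_sum]
  exact Finset.sum_pos' (fun j _ => by simpa using hS.posSemidef.dotProduct_mulVec_nonneg (M.col j))
    ⟨j, Finset.mem_univ j, by simpa using hS.dotProduct_mulVec_pos hj⟩

theorem trace_transpose_mul_mul_vecMulVec (M : Matrix m l ℝ) (S : Matrix m m ℝ)
    (v : m → ℝ) (φ : l → ℝ) : (Mᵀ * S * vecMulVec v φ).trace = (M *ᵥ φ) ⬝ᵥ S *ᵥ v := by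
  rw [mul_vecMulVec, trace_vecMulVec, ← mulVec_mulVec, dotProduct_comm, mulVec_transpose,
    dotProduct_comm, ← dotProduct_mulVec, dotProduct_comm]

theorem two_mul_dotProduct_mulVec_mulVec {A P : Matrix n n ℝ} (hP : P.IsSymm) (x : n → ℝ) :
    2 * (x ⬝ᵥ P *ᵥ A *ᵥ x) = x ⬝ᵥ (Aᵀ * P + P * A) *ᵥ x := by
  rw [add_mulVec, dotProduct_add, two_mul, ← mulVec_mulVec, ← mulVec_mulVec,
    dotProduct_mulVec x Aᵀ, vecMul_transpose, dotProduct_mulVec_comm_of_isSymm hP (A *ᵥ x)]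

theorem norm_le_sqrt_sum_sq (x : l → ℝ) : ‖x‖ ≤ √(∑ j, x j ^ 2) :=
  (pi_norm_le_iff_of_nonneg (Real.sqrt_nonneg _)).2 fun j =>
    Real.abs_le_sqrt (Finset.single_le_sum (fun j _ => sq_nonneg (x j)) (Finset.mem_univ j))

theorem isBounded_image_of_sqrt_sum_sq_le {X : Type*} {s : Set X} {f : X → l → ℝ} {C : ℝ}
    (hC : ∀ t ∈ s, √(∑ j, f t j ^ 2) ≤ C) : IsBounded (f '' s) :=
  isBounded_iff_forall_norm_le.2
    ⟨C, forall_mem_image.2 fun t ht => (norm_le_sqrt_sum_sq (f t)).trans (hC t ht)⟩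

end Matrix

section ErrorModel

variable {n m l : Type*} [Fintype n] [Fintype m] [Fintype l]

/-- Solutions on `[a, ∞)` of the adaptive-control error model `e' = A e + N Θ Φ`,
`Θ' = -(K e) Φᵀ`. The classical model has input matrix `N = B Λ` and adaptation gain
`K = Γ Bᵀ P`. -/
structure IsErrorModelSolution (A : Matrix n n ℝ) (N : Matrix n m ℝ) (K : Matrix m n ℝ)
    (Φ : ℝ → l → ℝ) (a : ℝ) (e : ℝ → n → ℝ) (Θ : ℝ → Matrix m l ℝ) : Prop where
  hasDerivWithinAt_error : ∀ t ∈ Ici a,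
    HasDerivWithinAt e (A *ᵥ e t + (N * Θ t) *ᵥ Φ t) (Ici a) t
  hasDerivWithinAt_parameter : ∀ t ∈ Ici a, ∀ i j,
    HasDerivWithinAt (fun s => Θ s i j) ((-vecMulVec (K *ᵥ e t) (Φ t)) i j) (Ici a) t

/-- The Lyapunov function `xᵀ P x + tr(Mᵀ S M)` on the joint state `(x, M)` of tracking error and
parameter error. -/
def lyapunovFunction (P : Matrix n n ℝ) (S : Matrix m m ℝ) (z : (n → ℝ) × Matrix m l ℝ) : ℝ :=
  z.1 ⬝ᵥ P *ᵥ z.1 + (z.2ᵀ * S * z.2).trace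

variable {A P Q : Matrix n n ℝ} {N : Matrix n m ℝ} {K : Matrix m n ℝ} {S : Matrix m m ℝ}

theorem lyapunovFunction_pos (hP : P.PosDef) (hS : S.PosDef) {z : (n → ℝ) × Matrix m l ℝ}
    (hz : z ≠ 0) : 0 < lyapunovFunction P S z := by
  have hPnonneg : 0 ≤ z.1 ⬝ᵥ P *ᵥ z.1 := hP.posSemidef.dotProduct_mulVec_nonneg z.1
  obtain hM | hM := eq_or_ne z.2 0
  · have hx : z.1 ≠ 0 := fun hx => hz (Prod.ext hx hM)
    simpa [lyapunovFunction, hM] using hP.dotProduct_mulVec_pos hx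
  · exact add_pos_of_nonneg_of_pos hPnonneg (trace_transpose_mul_mul_self_pos hS hM)

theorem lyapunovFunction_smul (r : ℝ) (z : (n → ℝ) × Matrix m l ℝ) :
    lyapunovFunction P S (r • z) = r ^ 2 * lyapunovFunction P S z := by
  simp only [lyapunovFunction, Prod.smul_fst, Prod.smul_snd, mulVec_smul, smul_dotProduct,
    dotProduct_smul, transpose_smul, Matrix.smul_mul, Matrix.mul_smul, trace_smul, smul_eq_mul]
  ring

theorem continuous_lyapunovFunction :
    Continuous (lyapunovFunction P S : (n → ℝ) × Matrix m l ℝ → ℝ) := by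
  unfold lyapunovFunction
  fun_prop

/-- The matching condition `S K = Nᵀ P` makes the contributions of the parameter error to the
derivative of the Lyapunov function cancel. -/
theorem dotProduct_mulVec_input_eq_trace_adaptation (hP : P.IsSymm) (hSK : S * K = Nᵀ * P)
    (x : n → ℝ) (M : Matrix m l ℝ) (φ : l → ℝ) :
    x ⬝ᵥ P *ᵥ (N * M) *ᵥ φ = (Mᵀ * S * vecMulVec (K *ᵥ x) φ).trace := by
  rw [trace_transpose_mul_mul_vecMulVec, mulVec_mulVec x S K, hSK, ← mulVec_mulVec x,
    dotProduct_mulVec (M *ᵥ φ), vecMul_transpose, ← mulVec_mulVec φ,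
    dotProduct_mulVec_comm_of_isSymm hP]

namespace IsErrorModelSolution

variable {Φ : ℝ → l → ℝ} {a : ℝ} {e : ℝ → n → ℝ} {Θ : ℝ → Matrix m l ℝ}

theorem hasDerivWithinAt_lyapunovFunction (h : IsErrorModelSolution A N K Φ a e Θ)
    (hP : P.IsSymm) (hS : S.IsSymm) (hLyap : Aᵀ * P + P * A = -Q) (hSK : S * K = Nᵀ * P) :
    ∀ t ∈ Ici a, HasDerivWithinAt (fun t => lyapunovFunction P S (e t, Θ t))
      (-(e t ⬝ᵥ Q *ᵥ e t)) (Ici a) t := by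
  intro t ht
  refine ((hasDerivWithinAt_dotProduct_mulVec_self_s2 hP (h.hasDerivWithinAt_error t ht)).add
    (hasDerivWithinAt_trace_transpose_mul_mul_self hS
      (h.hasDerivWithinAt_parameter t ht))).congr_deriv ?_
  have hdissipation : 2 * (e t ⬝ᵥ P *ᵥ A *ᵥ e t) = -(e t ⬝ᵥ Q *ᵥ e t) := by
    rw [two_mul_dotProduct_mulVec_mulVec hP, hLyap, neg_mulVec, dotProduct_neg]
  rw [mulVec_add, dotProduct_add, Matrix.mul_neg, trace_neg,
    dotProduct_mulVec_input_eq_trace_adaptation hP hSK]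
  linarith

open scoped Matrix.Norms.Elementwise

theorem isBounded_state (h : IsErrorModelSolution A N K Φ a e Θ) (hP : P.PosDef)
    (hQ : Q.PosSemidef) (hS : S.PosDef) (hLyap : Aᵀ * P + P * A = -Q) (hSK : S * K = Nᵀ * P) :
    IsBounded ((fun t => (e t, Θ t)) '' Ici a) := by
  have hanti := antitoneOn_Ici_of_hasDerivWithinAt_neg
    (h.hasDerivWithinAt_lyapunovFunction hP.isHermitian hS.isHermitian hLyap hSK)
    fun t _ => hQ.dotProduct_mulVec_nonneg (e t)
  refine (isBounded_setOf_le_of_homogeneous continuous_lyapunovFunction lyapunovFunction_smul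
    (fun _ => lyapunovFunction_pos hP hS) (lyapunovFunction P S (e a, Θ a))).subset ?_
  rintro _ ⟨t, ht, rfl⟩
  exact hanti self_mem_Ici ht ht

theorem uniformContinuousOn_comp_error (h : IsErrorModelSolution A N K Φ a e Θ)
    (hz : IsBounded ((fun t => (e t, Θ t)) '' Ici a)) (hΦ : IsBounded (Φ '' Ici a))
    {F : Type*} [UniformSpace F] {W : (n → ℝ) → F} (hW : Continuous W) :
    UniformContinuousOn (fun t => W (e t)) (Ici a) := by
  have he : IsBounded (e '' Ici a) := by
    simpa only [image_image] using isBounded_image_of_continuous continuous_fst hz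
  refine uniformContinuousOn_comp_of_isBounded_deriv hW (convex_Ici a)
    h.hasDerivWithinAt_error he ?_
  have hcont : Continuous fun p : ((n → ℝ) × Matrix m l ℝ) × (l → ℝ) =>
      A *ᵥ p.1.1 + (N * p.1.2) *ᵥ p.2 := by
    fun_prop
  refine (isBounded_image_of_continuous hcont (hz.prod hΦ)).subset ?_
  rintro _ ⟨t, ht, rfl⟩
  exact ⟨((e t, Θ t), Φ t), ⟨mem_image_of_mem _ ht, mem_image_of_mem _ ht⟩, rfl⟩

theorem tendsto_dotProduct_mulVec_zero (h : IsErrorModelSolution A N K Φ a e Θ) (hP : P.PosDef)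
    (hQ : Q.PosSemidef) (hS : S.PosDef) (hLyap : Aᵀ * P + P * A = -Q) (hSK : S * K = Nᵀ * P)
    (hΦ : IsBounded (Φ '' Ici a)) : Tendsto (fun t => e t ⬝ᵥ Q *ᵥ e t) atTop (𝓝 0) := by
  have hz := h.isBounded_state hP hQ hS hLyap hSK
  refine tendsto_zero_of_hasDerivWithinAt_neg
    (h.hasDerivWithinAt_lyapunovFunction hP.isHermitian hS.isHermitian hLyap hSK) ?_
    (fun t _ => hQ.dotProduct_mulVec_nonneg (e t))
    (h.uniformContinuousOn_comp_error hz hΦ (W := fun x => x ⬝ᵥ Q *ᵥ x) (by fun_prop))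
  simpa only [image_image] using
    (isBounded_image_of_continuous continuous_lyapunovFunction hz).bddBelow

end IsErrorModelSolution

theorem classical_ac_error_convergence_general {Φ : ℝ → l → ℝ} {a : ℝ} {e : ℝ → n → ℝ}
    {Θ : ℝ → Matrix m l ℝ} (h : IsErrorModelSolution A N K Φ a e Θ) (hP : P.PosDef)
    (hQ : Q.PosDef) (hS : S.PosDef) (hLyap : Aᵀ * P + P * A = -Q) (hSK : S * K = Nᵀ * P)
    (hΦ : IsBounded (Φ '' Ici a)) : Tendsto e atTop (𝓝 0) := by
  refine tendsto_zero_of_homogeneous_tendsto_zero (q := fun x => x ⬝ᵥ Q *ᵥ x) (by fun_prop)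
    (fun r x => ?_) (fun x hx => hQ.dotProduct_mulVec_pos hx)
    (h.tendsto_dotProduct_mulVec_zero hP hQ.posSemidef hS hLyap hSK hΦ)
  simp only [mulVec_smul, smul_dotProduct, dotProduct_smul, smul_eq_mul]
  ring

end ErrorModel

/-- Theorem 1, convergence. If in addition the regressor `Φ` is
bounded on `[0,∞)`, then along any solution of the classical adaptive-control error
model the tracking error converges to zero: `lim_{t→∞} e(t) = 0`. -/
theorem classical_ac_error_convergence
    (n m l : ℕ)
    (Am : Matrix (Fin n) (Fin n) ℝ) (B : Matrix (Fin n) (Fin m) ℝ)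
    (Q P : Matrix (Fin n) (Fin n) ℝ)
    (hQ : Q.PosDef) (hP : P.PosDef)
    (hLyap : Amᵀ * P + P * Am = -Q)
    (Λ Γ : Matrix (Fin m) (Fin m) ℝ)
    (hΛ : Λ.PosDef) (hΓ : Γ.PosDef) (hcomm : Λ * Γ = Γ * Λ)
    (Φ : ℝ → Fin l → ℝ) (hΦ : ContinuousOn Φ (Set.Ici 0))
    (hΦbdd : ∃ C, ∀ t ∈ Set.Ici (0 : ℝ), Real.sqrt (∑ j, Φ t j ^ 2) ≤ C)
    (e : ℝ → Fin n → ℝ) (Θ : ℝ → Matrix (Fin m) (Fin l) ℝ)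
    (he : ∀ t ∈ Set.Ici (0 : ℝ),
      HasDerivAt e (Am.mulVec (e t) + (B * Λ * Θ t).mulVec (Φ t)) t)
    (hΘ : ∀ t ∈ Set.Ici (0 : ℝ), ∀ i j,
      HasDerivAt (fun s => Θ s i j) (-((Γ * Bᵀ * P).mulVec (e t) i * Φ t j)) t) :
    Tendsto e atTop (nhds 0) := by
  obtain ⟨C, hC⟩ := hΦbdd
  exact classical_ac_error_convergence_general (S := Λ * Γ⁻¹)
    ⟨fun t ht => (he t ht).hasDerivWithinAt, fun t ht i j => (hΘ t ht i j).hasDerivWithinAt⟩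
    hP hQ (posDef_mul_inv_of_commute_s2 hΛ hΓ hcomm) hLyap
    (mul_inv_mul_gain_eq_transpose_mul hΛ.isHermitian hΓ.isUnit B P)
    (isBounded_image_of_sqrt_sum_sq_le hC)
end

section
/- (Equivalence of the integral and L¹ forms of persistent excitation.) Let Φ : [t₀,∞) → ℝ^N be continuous and bounded. Then the following are equivalent: (i) there exist T > 0 and α > 0 such that for all t ≥ t₀ the matrix ∫_t^{t+T} Φ(τ)Φ(τ)ᵀ dτ − αI is positive semidefinite; (ii) there exist T > 0 and ε₀ > 0 such that for all t ≥ t₀ and every unit vector w ∈ ℝ^N, (1/T)·∫_t^{t+T} |Φ(τ)ᵀ w| dτ ≥ ε₀. -/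
open Matrix MeasureTheory Filter intervalIntegral

/-!
For a unit vector `w`, the quadratic form of `∫ Φ Φᵀ` at `w` is `∫ (Φᵀ w)²`, so both conditions are
uniform lower bounds, over windows of length `T` and unit vectors `w`, for a moment of the scalar
function `f = Φᵀ w`. If `|Φ| ≤ C`, then `|f| ≤ C` by Cauchy–Schwarz, so `∫ f² ≤ C ∫ |f|`; conversely
`(∫ |f|)² ≤ T ∫ f²` by Jensen's inequality. The same window length `T` thus serves both conditions.
-/

section EuclideanVectors

variable {ι : Type*} [Fintype ι]

lemma abs_dotProduct_le_sqrt_sum_sq_of_unit (u : ι → ℝ) {w : ι → ℝ}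
    (hw : ∑ i, w i ^ 2 = 1) : |u ⬝ᵥ w| ≤ √(∑ i, u i ^ 2) := by
  refine Real.abs_le_sqrt ?_
  simpa only [dotProduct, hw, mul_one] using Finset.sum_mul_sq_le_sq_mul_sq Finset.univ u w

lemma norm_le_sqrt_sum_sq_s4 (u : ι → ℝ) : ‖u‖ ≤ √(∑ i, u i ^ 2) :=
  (pi_norm_le_iff_of_nonneg (Real.sqrt_nonneg _)).mpr fun i =>
    Real.abs_le_sqrt (Finset.single_le_sum (fun j _ => sq_nonneg (u j)) (Finset.mem_univ i))

lemma mul_sum_sq_le_dotProduct_mulVec_of_unit {A : Matrix ι ι ℝ} {c : ℝ}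
    (h : ∀ w : ι → ℝ, ∑ i, w i ^ 2 = 1 → c ≤ w ⬝ᵥ A *ᵥ w) (x : ι → ℝ) :
    c * ∑ i, x i ^ 2 ≤ x ⬝ᵥ A *ᵥ x := by
  rcases eq_or_ne x 0 with rfl | hx
  · simp
  set s := ∑ i, x i ^ 2 with hs
  have hs_pos : 0 < s := by
    obtain ⟨i, hi⟩ := Function.ne_iff.mp hx
    exact Finset.sum_pos' (fun j _ => sq_nonneg (x j)) ⟨i, Finset.mem_univ i, sq_pos_of_ne_zero hi⟩
  have hsqrt : (√s)⁻¹ ^ 2 = s⁻¹ := by rw [inv_pow, Real.sq_sqrt hs_pos.le]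
  have hunit : ∑ i, ((√s)⁻¹ • x) i ^ 2 = 1 := by
    simp only [Pi.smul_apply, smul_eq_mul, mul_pow, hsqrt]
    rw [← Finset.mul_sum, ← hs, inv_mul_cancel₀ hs_pos.ne']
  have hc := h _ hunit
  rwa [mulVec_smul, dotProduct_smul, smul_dotProduct, smul_smul, ← sq, hsqrt, smul_eq_mul,
    ← div_eq_inv_mul, le_div_iff₀ hs_pos] at hc

variable [DecidableEq ι]

lemma dotProduct_sub_smul_one_mulVec (A : Matrix ι ι ℝ) (c : ℝ) (w : ι → ℝ) :
    w ⬝ᵥ (A - c • (1 : Matrix ι ι ℝ)) *ᵥ w = w ⬝ᵥ A *ᵥ w - c * ∑ i, w i ^ 2 := by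
  rw [sub_mulVec, smul_mulVec, one_mulVec, dotProduct_sub, dotProduct_smul, smul_eq_mul]
  simp only [dotProduct, sq]

lemma posSemidef_sub_smul_one_iff {A : Matrix ι ι ℝ} (hA : A.IsHermitian) {c : ℝ} :
    (A - c • (1 : Matrix ι ι ℝ)).PosSemidef ↔
      ∀ w : ι → ℝ, ∑ i, w i ^ 2 = 1 → c ≤ w ⬝ᵥ A *ᵥ w := by
  have hherm : (A - c • (1 : Matrix ι ι ℝ)).IsHermitian :=
    hA.sub (isHermitian_one.smul (IsSelfAdjoint.all c))
  simp only [posSemidef_iff_dotProduct_mulVec, hherm, true_and, star_trivial,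
    dotProduct_sub_smul_one_mulVec, sub_nonneg]
  refine ⟨fun h w hw => ?_, mul_sum_sq_le_dotProduct_mulVec_of_unit⟩
  simpa only [hw, mul_one] using h w

end EuclideanVectors

section ScalarMoments

variable {α : Type*} [MeasurableSpace α] {μ : Measure α} {f : α → ℝ}

lemma integral_sq_le_mul_integral_abs (hf : Integrable f μ) {C : ℝ}
    (hC : ∀ᵐ x ∂μ, |f x| ≤ C) : ∫ x, f x ^ 2 ∂μ ≤ C * ∫ x, |f x| ∂μ := by
  rw [← MeasureTheory.integral_const_mul]
  refine integral_mono_of_nonneg (ae_of_all _ fun x => sq_nonneg (f x)) (hf.abs.const_mul C) ?_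
  filter_upwards [hC] with x hx
  rw [← sq_abs, sq]
  exact mul_le_mul_of_nonneg_right hx (abs_nonneg _)

lemma sq_integral_le_measureReal_univ_mul_integral_sq [IsFiniteMeasure μ] (hf : MemLp f 2 μ) :
    (∫ x, f x ∂μ) ^ 2 ≤ μ.real Set.univ * ∫ x, f x ^ 2 ∂μ := by
  rcases eq_zero_or_neZero μ with rfl | hμ
  · simp
  have hjensen : (⨍ x, f x ∂μ) ^ 2 ≤ ⨍ x, f x ^ 2 ∂μ :=
    even_two.convexOn_pow.map_average_le (continuous_pow 2).continuousOn isClosed_univ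
      (ae_of_all _ fun _ => Set.mem_univ _) (hf.integrable one_le_two) hf.integrable_sq
  calc (∫ x, f x ∂μ) ^ 2
      = μ.real Set.univ ^ 2 * (⨍ x, f x ∂μ) ^ 2 := by
        rw [← measure_smul_average μ f, smul_eq_mul, mul_pow]
    _ ≤ μ.real Set.univ ^ 2 * ⨍ x, f x ^ 2 ∂μ := by gcongr
    _ = μ.real Set.univ * ∫ x, f x ^ 2 ∂μ := by
        rw [← measure_smul_average μ fun x => f x ^ 2, smul_eq_mul, sq, mul_assoc]

end ScalarMoments

section SecondMomentMatrix

variable {α ι : Type*} [MeasurableSpace α] {μ : Measure α} {v : α → ι → ℝ}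

/-- The matrix `∫ v vᵀ dμ` of second moments of a vector-valued function `v`, integrated entrywise;
an entry whose integrand is not integrable is `0`. -/
noncomputable def secondMomentMatrix (μ : Measure α) (v : α → ι → ℝ) : Matrix ι ι ℝ :=
  Matrix.of fun i j => ∫ x, v x i * v x j ∂μ

lemma isHermitian_secondMomentMatrix : (secondMomentMatrix μ v).IsHermitian := by
  ext i j
  simp only [secondMomentMatrix, conjTranspose_apply, of_apply, star_trivial, mul_comm]

variable [Fintype ι]

lemma memLp_dotProduct_const {p : ENNReal} (hv : MemLp v p μ) (w : ι → ℝ) :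
    MemLp (fun x => v x ⬝ᵥ w) p μ :=
  memLp_finsetSum _ fun i _ => (memLp_pi_iff.mp hv i).mul_const (w i)

lemma dotProduct_secondMomentMatrix_mulVec (hv : MemLp v 2 μ) (w : ι → ℝ) :
    w ⬝ᵥ secondMomentMatrix μ v *ᵥ w = ∫ x, (v x ⬝ᵥ w) ^ 2 ∂μ := by
  have hint (i j : ι) : Integrable (fun x => w i * (v x i * v x j * w j)) μ :=
    (((memLp_pi_iff.mp hv i).integrable_mul (memLp_pi_iff.mp hv j)).mul_const _).const_mul _
  calc w ⬝ᵥ secondMomentMatrix μ v *ᵥ w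
      = ∑ i, ∑ j, ∫ x, w i * (v x i * v x j * w j) ∂μ := by
        simp only [dotProduct, mulVec, secondMomentMatrix, of_apply, Finset.mul_sum,
          MeasureTheory.integral_const_mul, MeasureTheory.integral_mul_const]
    _ = ∫ x, ∑ i, ∑ j, w i * (v x i * v x j * w j) ∂μ := by
        rw [integral_finsetSum _ fun i _ => integrable_finsetSum _ fun j _ => hint i j]
        simp only [integral_finsetSum _ fun j _ => hint _ j]
    _ = ∫ x, (v x ⬝ᵥ w) ^ 2 ∂μ := by
        simp only [sq, dotProduct, Finset.sum_mul_sum]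
        refine integral_congr_ae (ae_of_all _ fun x => ?_)
        exact Finset.sum_congr rfl fun i _ => Finset.sum_congr rfl fun j _ => by ring

lemma posSemidef_secondMomentMatrix_sub_smul_one_iff [DecidableEq ι] (hv : MemLp v 2 μ) {c : ℝ} :
    (secondMomentMatrix μ v - c • (1 : Matrix ι ι ℝ)).PosSemidef ↔
      ∀ w : ι → ℝ, ∑ i, w i ^ 2 = 1 → c ≤ ∫ x, (v x ⬝ᵥ w) ^ 2 ∂μ := by
  simp only [posSemidef_sub_smul_one_iff isHermitian_secondMomentMatrix,
    dotProduct_secondMomentMatrix_mulVec hv]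

variable [DecidableEq ι] [IsFiniteMeasure μ]

lemma le_mul_integral_abs_dotProduct_of_posSemidef (hv : MemLp v 2 μ) {C c : ℝ}
    (hC : ∀ᵐ x ∂μ, √(∑ i, v x i ^ 2) ≤ C)
    (h : (secondMomentMatrix μ v - c • (1 : Matrix ι ι ℝ)).PosSemidef)
    {w : ι → ℝ} (hw : ∑ i, w i ^ 2 = 1) : c ≤ C * ∫ x, |v x ⬝ᵥ w| ∂μ := by
  have hint : Integrable (fun x => v x ⬝ᵥ w) μ :=
    (memLp_dotProduct_const hv w).integrable one_le_two
  have hbound : ∀ᵐ x ∂μ, |v x ⬝ᵥ w| ≤ C :=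
    hC.mono fun x hx => (abs_dotProduct_le_sqrt_sum_sq_of_unit (v x) hw).trans hx
  exact ((posSemidef_secondMomentMatrix_sub_smul_one_iff hv).mp h w hw).trans
    (integral_sq_le_mul_integral_abs hint hbound)

lemma posSemidef_of_mul_measureReal_univ_le_integral_abs_dotProduct (hv : MemLp v 2 μ)
    {ε : ℝ} (hε : 0 ≤ ε)
    (h : ∀ w : ι → ℝ, ∑ i, w i ^ 2 = 1 → ε * μ.real Set.univ ≤ ∫ x, |v x ⬝ᵥ w| ∂μ) :
    (secondMomentMatrix μ v - (ε ^ 2 * μ.real Set.univ) • (1 : Matrix ι ι ℝ)).PosSemidef := by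
  refine (posSemidef_secondMomentMatrix_sub_smul_one_iff hv).mpr fun w hw => ?_
  rcases eq_zero_or_neZero μ with rfl | hμ
  · simp
  refine le_of_mul_le_mul_left ?_ (measureReal_univ_pos (μ := μ))
  calc μ.real Set.univ * (ε ^ 2 * μ.real Set.univ)
      = (ε * μ.real Set.univ) ^ 2 := by ring
    _ ≤ (∫ x, |v x ⬝ᵥ w| ∂μ) ^ 2 := by gcongr; exact h w hw
    _ ≤ μ.real Set.univ * ∫ x, |v x ⬝ᵥ w| ^ 2 ∂μ :=
        sq_integral_le_measureReal_univ_mul_integral_sq (memLp_dotProduct_const hv w).abs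
    _ = μ.real Set.univ * ∫ x, (v x ⬝ᵥ w) ^ 2 ∂μ := by simp only [sq_abs]

end SecondMomentMatrix

theorem pe_integral_L1_equiv_general {ι : Type*} [Fintype ι] [DecidableEq ι] {t₀ T : ℝ}
    (hT : 0 < T) {Φ : ℝ → ι → ℝ}
    (hΦmeas : AEStronglyMeasurable Φ (volume.restrict (Set.Ici t₀)))
    (hΦbdd : ∃ C, ∀ᵐ t ∂volume.restrict (Set.Ici t₀), √(∑ i, Φ t i ^ 2) ≤ C) :
    (∃ α > (0 : ℝ), ∀ t ∈ Set.Ici t₀,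
      (Matrix.of (fun i j => ∫ τ in t..(t + T), Φ τ i * Φ τ j) -
        α • (1 : Matrix ι ι ℝ)).PosSemidef) ↔
    (∃ ε₀ > (0 : ℝ), ∀ t ∈ Set.Ici t₀, ∀ w : ι → ℝ, √(∑ i, w i ^ 2) = 1 →
        ε₀ ≤ (1 / T) * ∫ τ in t..(t + T), |Φ τ ⬝ᵥ w|) := by
  obtain ⟨C, hCpos, hC⟩ : ∃ C > 0, ∀ᵐ t ∂volume.restrict (Set.Ici t₀), √(∑ i, Φ t i ^ 2) ≤ C :=
    hΦbdd.elim fun C hC => ⟨max C 1, by positivity, hC.mono fun _ h => le_max_of_le_left h⟩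
  let window (t : ℝ) : Measure ℝ := volume.restrict (Set.Ioc t (t + T))
  have hmass (t : ℝ) : (window t).real Set.univ = T := by simp [window, hT.le]
  have hsub {t : ℝ} (ht : t ∈ Set.Ici t₀) : window t ≤ volume.restrict (Set.Ici t₀) :=
    Measure.restrict_mono (Set.Ioc_subset_Ioi_self.trans (Set.Ioi_subset_Ici ht)) le_rfl
  have hbound {t : ℝ} (ht : t ∈ Set.Ici t₀) : ∀ᵐ τ ∂window t, √(∑ i, Φ τ i ^ 2) ≤ C :=
    ae_mono (hsub ht) hC
  have hLp {t : ℝ} (ht : t ∈ Set.Ici t₀) : MemLp Φ 2 (window t) :=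
    .of_bound (hΦmeas.mono_measure (hsub ht)) C
      ((hbound ht).mono fun τ hτ => (norm_le_sqrt_sum_sq_s4 (Φ τ)).trans hτ)
  simp only [Real.sqrt_eq_one, one_div, ← div_eq_inv_mul, le_div_iff₀ hT,
    integral_of_le (le_add_of_nonneg_right hT.le)]
  constructor
  · rintro ⟨α, hα, hpsd⟩
    refine ⟨α / (C * T), by positivity, fun t ht w hw => ?_⟩
    rw [div_mul_eq_mul_div, mul_div_mul_right _ _ hT.ne', div_le_iff₀' hCpos]
    exact le_mul_integral_abs_dotProduct_of_posSemidef (hLp ht) (hbound ht) (hpsd t ht) hw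
  · rintro ⟨ε, hε, hL1⟩
    refine ⟨ε ^ 2 * T, by positivity, fun t ht => ?_⟩
    have hpsd := posSemidef_of_mul_measureReal_univ_le_integral_abs_dotProduct (hLp ht) hε.le
    rw [hmass] at hpsd
    exact hpsd (hL1 t ht)

/-- Equivalence of the integral and L¹ forms of persistent
excitation. For a continuous bounded `Φ : [t₀,∞) → ℝ^N`, the matrix form
`∫_t^{t+T} Φ Φᵀ ≥ α I` of persistent excitation is equivalent to the L¹ form
`(1/T)∫_t^{t+T} |Φᵀ w| ≥ ε₀` over all unit vectors `w`. -/
theorem pe_integral_L1_equiv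
    (N : ℕ) (t₀ : ℝ) (Φ : ℝ → Fin N → ℝ)
    (hΦcont : ContinuousOn Φ (Set.Ici t₀))
    (hΦbdd : ∃ C, ∀ t ∈ Set.Ici t₀, Real.sqrt (∑ i, Φ t i ^ 2) ≤ C) :
    (∃ T > (0 : ℝ), ∃ α > (0 : ℝ), ∀ t ∈ Set.Ici t₀,
      (Matrix.of (fun i j => ∫ τ in t..(t + T), Φ τ i * Φ τ j) -
        α • (1 : Matrix (Fin N) (Fin N) ℝ)).PosSemidef) ↔
    (∃ T > (0 : ℝ), ∃ ε₀ > (0 : ℝ), ∀ t ∈ Set.Ici t₀,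
      ∀ w : Fin N → ℝ, Real.sqrt (∑ i, w i ^ 2) = 1 →
        ε₀ ≤ (1 / T) * ∫ τ in t..(t + T), |Φ τ ⬝ᵥ w|) :=
  exists_congr fun _ => and_congr_right fun hT =>
    pe_integral_L1_equiv_general hT (hΦcont.aestronglyMeasurable measurableSet_Ici)
      (hΦbdd.imp fun _ hC => ae_restrict_of_forall_mem measurableSet_Ici hC)
end
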